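/- Let (X,μ) be a measure space, let S, N : X → [0,∞] be measurable, and let C > 0 be such that for every α > 0, μ({x : S(x) > α}) ≤ C·μ({x : N(x) > α}) + C·α^{-2} ∫₀^α s·μ({x : N(x) > s}) ds. Then ∫_X S dμ ≤ 2C ∫_X N dμ. -/

import Mathlib

open MeasureTheory

/-!
By the layer cake formula `∫ S dμ = ∫₀^∞ μ {S > α} dα`, so one integrates the hypothesis over
`α ∈ (0, ∞)`. With `F s = μ {N > s}`, Tonelli's theorem and
`∫_s^∞ α⁻ᵖ dα = s¹⁻ᵖ / (p - 1)` show that the averages `α⁻ᵖ ∫₀^α sᵖ⁻¹ F s ds` have integral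
`(p - 1)⁻¹ ∫₀^∞ F = (p - 1)⁻¹ ∫ N dμ`; here `p = 2`. Tonelli's theorem is applied only to Lebesgue
measure on the half-line, so `μ` need not be σ-finite.
-/

open Set ENNReal

section LayerCake

variable {X : Type*} [MeasurableSpace X] (μ : Measure X)

lemma lintegral_eq_lintegral_meas_ofReal_lt {f : X → ℝ≥0∞} (hf : AEMeasurable f μ) :
    ∫⁻ x, f x ∂μ = ∫⁻ t in Ioi (0 : ℝ), μ {x | ENNReal.ofReal t < f x} := by
  by_cases hfin : ∀ᵐ x ∂μ, f x ≠ ∞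
  · calc ∫⁻ x, f x ∂μ = ∫⁻ x, ENNReal.ofReal (f x).toReal ∂μ := by
          refine lintegral_congr_ae ?_
          filter_upwards [hfin] with x hx using (ofReal_toReal hx).symm
      _ = ∫⁻ t in Ioi (0 : ℝ), μ {x | t < (f x).toReal} :=
          lintegral_eq_lintegral_meas_lt μ (.of_forall fun _ => toReal_nonneg) hf.ennreal_toReal
      _ = ∫⁻ t in Ioi (0 : ℝ), μ {x | ENNReal.ofReal t < f x} := by
          refine setLIntegral_congr_fun measurableSet_Ioi fun t ht => measure_congr ?_
          filter_upwards [hfin] with x hx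
          exact propext (ofReal_lt_iff_lt_toReal (mem_Ioi.mp ht).le hx).symm
  · have htop : μ {x | f x = ∞} ≠ 0 := by simpa only [ae_iff, not_not] using hfin
    rw [lintegral_eq_top_of_measure_eq_top_ne_zero hf htop, eq_comm, eq_top_iff]
    calc ∞ = ∫⁻ _ in Ioi (0 : ℝ), μ {x | f x = ∞} := by simp [htop]
      _ ≤ ∫⁻ t in Ioi (0 : ℝ), μ {x | ENNReal.ofReal t < f x} :=
          lintegral_mono fun _ => measure_mono fun _ hx => ofReal_lt_top.trans_eq hx.symm

lemma lintegral_le_lintegral_meas_ofReal_lt (f : X → ℝ≥0∞) :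
    ∫⁻ x, f x ∂μ ≤ ∫⁻ t in Ioi (0 : ℝ), μ {x | ENNReal.ofReal t < f x} := by
  obtain ⟨g, hg, hgf, hfg⟩ := exists_measurable_le_lintegral_eq μ f
  rw [hfg, lintegral_eq_lintegral_meas_ofReal_lt μ hg.aemeasurable]
  exact lintegral_mono fun _ => measure_mono fun x hx => lt_of_lt_of_le hx (hgf x)

lemma measurable_meas_ofReal_lt (f : X → ℝ≥0∞) :
    Measurable fun t : ℝ => μ {x | ENNReal.ofReal t < f x} :=
  Antitone.measurable fun _ _ hst =>
    measure_mono fun _ hx => (ofReal_le_ofReal hst).trans_lt hx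

end LayerCake

lemma lintegral_mul_lintegral_Iio_eq_lintegral_lintegral_Ioi_mul {R : Type*} [LinearOrder R]
    [TopologicalSpace R] [OrderClosedTopology R] [SecondCountableTopology R] [MeasurableSpace R]
    [OpensMeasurableSpace R] (μ ν : Measure R) [SFinite μ] [SFinite ν] {u v : R → ℝ≥0∞}
    (hu : Measurable u) (hv : Measurable v) :
    ∫⁻ x, u x * ∫⁻ y in Iio x, v y ∂ν ∂μ = ∫⁻ y, (∫⁻ x in Ioi y, u x ∂μ) * v y ∂ν := by
  have hmeas : Measurable ({z : R × R | z.2 < z.1}.indicator fun z => u z.1 * v z.2) :=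
    Measurable.indicator (by fun_prop) (measurableSet_lt measurable_snd measurable_fst)
  calc ∫⁻ x, u x * ∫⁻ y in Iio x, v y ∂ν ∂μ
      = ∫⁻ x, ∫⁻ y, {z : R × R | z.2 < z.1}.indicator (fun z => u z.1 * v z.2) (x, y) ∂ν ∂μ := by
        refine lintegral_congr fun x => ?_
        rw [← lintegral_const_mul _ hv, ← lintegral_indicator measurableSet_Iio]
        rfl
    _ = ∫⁻ y, ∫⁻ x, {z : R × R | z.2 < z.1}.indicator (fun z => u z.1 * v z.2) (x, y) ∂μ ∂ν :=
        lintegral_lintegral_swap hmeas.aemeasurable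
    _ = ∫⁻ y, (∫⁻ x in Ioi y, u x ∂μ) * v y ∂ν := by
        refine lintegral_congr fun y => ?_
        rw [← lintegral_mul_const _ hu, ← lintegral_indicator measurableSet_Ioi]
        rfl

section Averages

variable {p : ℝ} (hp : 1 < p)
include hp

lemma lintegral_Ioi_inv_ofReal_rpow {s : ℝ} (hs : 0 < s) :
    ∫⁻ t in Ioi s, (ENNReal.ofReal t ^ p)⁻¹
      = (ENNReal.ofReal (p - 1))⁻¹ * (ENNReal.ofReal s ^ (p - 1))⁻¹ := by
  calc ∫⁻ t in Ioi s, (ENNReal.ofReal t ^ p)⁻¹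
      = ∫⁻ t in Ioi s, ENNReal.ofReal (t ^ (-p)) := by
        refine setLIntegral_congr_fun measurableSet_Ioi fun t ht => ?_
        rw [← ENNReal.rpow_neg, ofReal_rpow_of_pos (hs.trans ht)]
    _ = ENNReal.ofReal (∫ t in Ioi s, t ^ (-p)) := by
        refine (ofReal_integral_eq_lintegral_ofReal
          (integrableOn_Ioi_rpow_of_lt (by linarith) hs) ?_).symm
        filter_upwards [ae_restrict_mem measurableSet_Ioi] with t ht
        exact Real.rpow_nonneg (hs.trans ht).le _
    _ = ENNReal.ofReal ((p - 1)⁻¹ * s ^ (-(p - 1))) := by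
        rw [integral_Ioi_rpow_of_lt (by linarith) hs, neg_div, ← div_neg, div_eq_inv_mul]
        ring_nf
    _ = (ENNReal.ofReal (p - 1))⁻¹ * (ENNReal.ofReal s ^ (p - 1))⁻¹ := by
        rw [ofReal_mul (by simpa using hp.le), ofReal_inv_of_pos (by linarith),
          ← ofReal_rpow_of_pos hs, ENNReal.rpow_neg]

lemma lintegral_inv_rpow_mul_lintegral_Ioo_rpow_mul {F : ℝ → ℝ≥0∞} (hF : Measurable F) :
    ∫⁻ t in Ioi (0 : ℝ), (ENNReal.ofReal t ^ p)⁻¹ *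
        ∫⁻ s in Ioo 0 t, ENNReal.ofReal s ^ (p - 1) * F s
      = (ENNReal.ofReal (p - 1))⁻¹ * ∫⁻ s in Ioi (0 : ℝ), F s := by
  have htonelli := lintegral_mul_lintegral_Iio_eq_lintegral_lintegral_Ioi_mul
    (volume.restrict (Ioi (0 : ℝ))) (volume.restrict (Ioi 0))
    (u := fun t => (ENNReal.ofReal t ^ p)⁻¹) (v := fun s => ENNReal.ofReal s ^ (p - 1) * F s)
    (by fun_prop) (by fun_prop)
  simp only [Measure.restrict_restrict measurableSet_Iio, Iio_inter_Ioi] at htonelli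
  rw [htonelli, ← lintegral_const_mul _ hF]
  refine setLIntegral_congr_fun measurableSet_Ioi fun s (hs : 0 < s) => ?_
  have hpow_ne_zero : ENNReal.ofReal s ^ (p - 1) ≠ 0 := by
    simp [hs.not_ge]
  have hpow_ne_top : ENNReal.ofReal s ^ (p - 1) ≠ ∞ :=
    rpow_ne_top_of_nonneg (by linarith) ofReal_ne_top
  simp only [Measure.restrict_restrict measurableSet_Ioi,
    inter_eq_left.mpr (Ioi_subset_Ioi hs.le)]
  rw [lintegral_Ioi_inv_ofReal_rpow hp hs, mul_assoc,
    ENNReal.inv_mul_cancel_left hpow_ne_zero hpow_ne_top]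

end Averages

theorem good_lambda_implies_L1_general {X : Type*} [MeasurableSpace X] (μ : Measure X)
    {S N : X → ℝ≥0∞} (hN : AEMeasurable N μ) {p : ℝ} (hp : 1 < p) {A B : ℝ≥0∞}
    (hgood : ∀ α : ℝ, 0 < α →
      μ {x | ENNReal.ofReal α < S x}
        ≤ A * μ {x | ENNReal.ofReal α < N x}
          + B / ENNReal.ofReal α ^ p *
              ∫⁻ s in Ioo 0 α, ENNReal.ofReal s ^ (p - 1) * μ {x | ENNReal.ofReal s < N x}) :
    ∫⁻ x, S x ∂μ ≤ (A + B / ENNReal.ofReal (p - 1)) * ∫⁻ x, N x ∂μ := by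
  set F : ℝ → ℝ≥0∞ := fun s => μ {x | ENNReal.ofReal s < N x}
  have hF : Measurable F := measurable_meas_ofReal_lt μ N
  have hinner : Measurable fun α : ℝ => ∫⁻ s in Ioo 0 α, ENNReal.ofReal s ^ (p - 1) * F s :=
    Monotone.measurable fun _ _ h => lintegral_mono_set (Ioo_subset_Ioo_right h)
  calc ∫⁻ x, S x ∂μ
      ≤ ∫⁻ α in Ioi (0 : ℝ), μ {x | ENNReal.ofReal α < S x} :=
        lintegral_le_lintegral_meas_ofReal_lt μ S
    _ ≤ ∫⁻ α in Ioi (0 : ℝ), (A * F α + B * ((ENNReal.ofReal α ^ p)⁻¹ *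
          ∫⁻ s in Ioo 0 α, ENNReal.ofReal s ^ (p - 1) * F s)) := by
        simpa only [div_eq_mul_inv, mul_assoc] using setLIntegral_mono' measurableSet_Ioi hgood
    _ = A * (∫⁻ α in Ioi (0 : ℝ), F α)
          + B * ((ENNReal.ofReal (p - 1))⁻¹ * ∫⁻ α in Ioi (0 : ℝ), F α) := by
        rw [lintegral_add_left (hF.const_mul A), lintegral_const_mul A hF,
          lintegral_const_mul B (by fun_prop), lintegral_inv_rpow_mul_lintegral_Ioo_rpow_mul hp hF]
    _ = (A + B / ENNReal.ofReal (p - 1)) * ∫⁻ x, N x ∂μ := by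
        rw [lintegral_eq_lintegral_meas_ofReal_lt μ hN, div_eq_mul_inv, add_mul, mul_assoc]

/-- If `S, N : X → [0,∞]` satisfy the good-λ type distributional inequality
`μ({S > α}) ≤ C·μ({N > α}) + C·α⁻² ∫₀^α s·μ({N > s}) ds` for all `α > 0`, then
`∫ S dμ ≤ 2C ∫ N dμ`. -/
theorem good_lambda_implies_L1 {X : Type*} [MeasurableSpace X] (μ : Measure X)
    (S N : X → ENNReal) (hS : Measurable S) (hN : Measurable N)
    (C : ℝ) (hC : 0 < C)
    (hgood : ∀ α : ℝ, 0 < α →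
      μ {x : X | ENNReal.ofReal α < S x}
        ≤ ENNReal.ofReal C * μ {x : X | ENNReal.ofReal α < N x}
          + ENNReal.ofReal C / (ENNReal.ofReal α) ^ 2 *
              ∫⁻ s in Set.Ioo (0 : ℝ) α,
                ENNReal.ofReal s * μ {x : X | ENNReal.ofReal s < N x}) :
    ∫⁻ x, S x ∂μ ≤ ENNReal.ofReal (2 * C) * ∫⁻ x, N x ∂μ := by
  have hsq : (2 : ℝ) - 1 = 1 := by norm_num
  simpa [hsq, two_mul, ofReal_add hC.le hC.le] using
    good_lambda_implies_L1_general μ hN.aemeasurable one_lt_two (by simpa [hsq] using hgood)
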